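/- arXiv:math/0403094 — 4 statements merged into one kernel-verified Lean document; each statement's English description precedes it below -/
import Mathlib

section
/- Let P be a finite bounded poset and let A be an antichain in P. Then A** ≤ A, where * denotes the blocker operation and ≤ is the partial order on antichains. -/
/-- The blocker of a set `A` in a poset with bottom element: the minimal elements among
those having a common atom with every member of `A`. -/
def blocker {P : Type*} [PartialOrder P] [OrderBot P] (A : Set P) : Set P :=
  {x | (∀ a ∈ A, ∃ l : P, IsAtom l ∧ l ≤ x ∧ l ≤ a) ∧
    ∀ y : P, (∀ a ∈ A, ∃ l : P, IsAtom l ∧ l ≤ y ∧ l ≤ a) → y ≤ x → y = x}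

/-- An antichain in a poset with bottom element, in the sense of Björner–Hultman:
a nonempty set avoiding `⊥` whose elements are pairwise incomparable. -/
def IsAnti {P : Type*} [PartialOrder P] [OrderBot P] (A : Set P) : Prop :=
  A.Nonempty ∧ ⊥ ∉ A ∧ IsAntichain (· ≤ ·) A

/-- The partial order on antichains: `antLE A B` iff for each `b ∈ B` there is
`a ∈ A` with `a ≤ b`. -/
def antLE {P : Type*} [Preorder P] (A B : Set P) : Prop :=
  ∀ b ∈ B, ∃ a ∈ A, a ≤ b

/-!
Sharing an atom is a symmetric relation and every element of `blocker A` shares one with every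
element of `A`, so each `b ∈ A` belongs to the set whose minimal elements form
`blocker (blocker A)`. By well-foundedness one of these minimal elements lies below `b`.
-/

section Transversals

variable {P : Type*} [PartialOrder P] [OrderBot P] {A B : Set P} {x y : P}

/-- The relation `Λ(x) ∩ Λ(y) ≠ ∅` between elements of a poset, where `Λ(x)` is the set of atoms
below `x`, which underlies the definition of the blocker. -/
def SharesAtom (x y : P) : Prop :=
  ∃ l : P, IsAtom l ∧ l ≤ x ∧ l ≤ y

theorem SharesAtom.symm (h : SharesAtom x y) : SharesAtom y x :=
  let ⟨l, hl, hlx, hly⟩ := h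
  ⟨l, hl, hly, hlx⟩

/-- The set whose minimal elements form the blocker of `A`, named after the transversals of a
hypergraph, which it generalizes. -/
def transversals (A : Set P) : Set P :=
  {x | ∀ a ∈ A, SharesAtom x a}

theorem subset_transversals_comm : A ⊆ transversals B ↔ B ⊆ transversals A :=
  ⟨fun h b hb _ ha => (h ha b hb).symm, fun h a ha _ hb => (h hb a ha).symm⟩

theorem mem_blocker_iff_minimal : x ∈ blocker A ↔ Minimal (· ∈ transversals A) x :=
  ⟨fun ⟨hx, hmin⟩ => ⟨hx, fun y hy hyx => (hmin y hy hyx).ge⟩,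
    fun hx => ⟨hx.prop, fun _ hy hyx => hx.eq_of_le hy hyx⟩⟩

theorem blocker_subset_transversals : blocker A ⊆ transversals A :=
  fun _ hx => (mem_blocker_iff_minimal.mp hx).prop

theorem antLE_blocker_transversals [WellFoundedLT P] (A : Set P) :
    antLE (blocker A) (transversals A) := by
  intro b hb
  obtain ⟨m, hmb, hm⟩ := exists_minimal_le_of_wellFoundedLT (· ∈ transversals A) b hb
  exact ⟨m, mem_blocker_iff_minimal.mpr hm, hmb⟩

end Transversals

theorem blocker_blocker_le_general {P : Type*} [PartialOrder P] [OrderBot P] [WellFoundedLT P]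
    (A : Set P) : antLE (blocker (blocker A)) A := by
  have hA : A ⊆ transversals (blocker A) :=
    subset_transversals_comm.mp blocker_subset_transversals
  exact fun b hb => antLE_blocker_transversals (blocker A) b (hA hb)

/-- Lemma 2.3(2): `A** ≤ A`. -/
theorem blocker_blocker_le {P : Type*} [PartialOrder P] [BoundedOrder P] [Fintype P]
    (A : Set P) (hA : IsAnti A) :
    antLE (blocker (blocker A)) A :=
  blocker_blocker_le_general A
end

section
/- Let P be a finite bounded poset such that A** = A for all antichains A in P. Then P is isomorphic (as a poset) to a well-complemented subposet of a Boolean lattice; concretely, the map x ↦ Λ(x) is a poset isomorphism from P onto its image in the Boolean lattice of all subsets of Λ, and this image contains the empty set and all singletons and is closed under complementation in Λ. -/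
/-- `Λ(x)`, the set of atoms below `x`. -/
def atomsBelow {P : Type*} [PartialOrder P] [OrderBot P] (x : P) : Set P :=
  {l | IsAtom l ∧ l ≤ x}

/-!
Under `A** = A`, an antichain `A` is determined by the elements that meet all its members in
atoms. Hence adding a new element `x` to an antichain must destroy some blocking element: there is
a `y` blocking `A` with `Λ(y) ∩ Λ(x) = ∅`.

For `A = {x}` and a new element `y`, this forbids `Λ(x) ⊆ Λ(y)` when `x` and `y` are incomparable;
if instead `y < x`, then `Λ(x) ⊆ Λ(y)` would give `{x}` and `{y}` the same blocking elements. When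
`A` is the set of atoms not below `x`, the element obtained has exactly `A` as its atoms, so it is
the complement of `x`.
-/

section Blocks

variable {P : Type*} [PartialOrder P] [OrderBot P] {A B : Set P} {x y a : P}

/-- `Blocks A x` says that `x` has a common atom with every member of `A`, so that `A*` is the set
of minimal elements blocking `A`. -/
def Blocks (A : Set P) (x : P) : Prop :=
  ∀ a ∈ A, (atomsBelow x ∩ atomsBelow a).Nonempty

theorem atomsBelow_mono (hxy : x ≤ y) : atomsBelow x ⊆ atomsBelow y :=
  fun _ hl => ⟨hl.1, hl.2.trans hxy⟩

theorem atomsBelow_bot : atomsBelow (⊥ : P) = ∅ :=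
  Set.eq_empty_of_forall_notMem fun _ hl => hl.1.ne_bot (le_bot_iff.1 hl.2)

theorem atomsBelow_of_isAtom (ha : IsAtom a) : atomsBelow a = {a} :=
  Set.ext fun _ => ⟨fun hl => (ha.le_iff_eq hl.1.ne_bot).1 hl.2, by
    rintro rfl
    exact ⟨ha, le_rfl⟩⟩

theorem atomsBelow_nonempty [IsAtomic P] (hx : x ≠ ⊥) : (atomsBelow x).Nonempty :=
  (eq_bot_or_exists_atom_le x).resolve_left hx

theorem blocks_insert_iff :
    Blocks (insert a A) x ↔ (atomsBelow x ∩ atomsBelow a).Nonempty ∧ Blocks A x :=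
  Set.forall_mem_insert

theorem blocks_singleton_iff : Blocks {a} x ↔ (atomsBelow x ∩ atomsBelow a).Nonempty :=
  forall_eq

theorem blocks_iff_subset_of_isAtom (hA : ∀ a ∈ A, IsAtom a) : Blocks A x ↔ A ⊆ atomsBelow x :=
  forall₂_congr fun a ha => by rw [atomsBelow_of_isAtom (hA a ha), Set.inter_singleton_nonempty]

theorem blocker_eq_setOf_minimal (A : Set P) : blocker A = {x | Minimal (Blocks A) x} := by
  have blocks_iff (x : P) : Blocks A x ↔ ∀ a ∈ A, ∃ l : P, IsAtom l ∧ l ≤ x ∧ l ≤ a :=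
    forall₂_congr fun a _ => exists_congr fun l =>
      ⟨fun hl => ⟨hl.1.1, hl.1.2, hl.2.2⟩, fun hl => ⟨⟨hl.1, hl.2.1⟩, hl.1, hl.2.2⟩⟩
  ext x
  simp only [blocker, Set.mem_ofPred_eq, minimal_iff, blocks_iff, eq_comm]

theorem blocker_congr (hAB : ∀ x, Blocks A x ↔ Blocks B x) : blocker A = blocker B := by
  rw [blocker_eq_setOf_minimal, blocker_eq_setOf_minimal, funext fun x => propext (hAB x)]

theorem blocker_empty : blocker (∅ : Set P) = {⊥} := by
  have blocks_empty : Blocks (∅ : Set P) = fun _ => True :=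
    funext fun _ => eq_true fun _ ha => absurd ha (Set.notMem_empty _)
  ext x
  rw [blocker_eq_setOf_minimal, blocks_empty, Set.mem_ofPred_eq, minimal_true, isMin_iff_eq_bot,
    Set.mem_singleton_iff]

theorem isAnti_singleton (hx : x ≠ ⊥) : IsAnti {x} :=
  ⟨Set.singleton_nonempty x, hx.symm, IsAntichain.singleton⟩

theorem IsAnti.insert (hA : IsAnti A) (hx : x ≠ ⊥) (hxA : ∀ a ∈ A, ¬ x ≤ a)
    (hAx : ∀ a ∈ A, ¬ a ≤ x) : IsAnti (insert x A) :=
  ⟨Set.insert_nonempty x A, fun hb => hb.elim hx.symm hA.2.1,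
    hA.2.2.insert (fun a ha _ => hAx a ha) (fun a ha _ => hxA a ha)⟩

theorem isAnti_of_isAtom (hA : A.Nonempty) (hatom : ∀ a ∈ A, IsAtom a) : IsAnti A :=
  ⟨hA, fun hb => (hatom ⊥ hb).ne_bot rfl, fun a ha b hb hab hle =>
    hab (((hatom b hb).le_iff_eq (hatom a ha).ne_bot).1 hle)⟩

end Blocks

/-- Strong blocker duality: `A** = A` for every antichain `A` of `P`. -/
def StrongBlockerDuality (P : Type*) [PartialOrder P] [OrderBot P] : Prop :=
  ∀ A : Set P, IsAnti A → blocker (blocker A) = A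

namespace StrongBlockerDuality

variable {P : Type*} [PartialOrder P] [OrderBot P] {A B : Set P} {x y : P}

theorem eq_of_blocks_iff (h : StrongBlockerDuality P) (hA : IsAnti A) (hB : IsAnti B)
    (hAB : ∀ x, Blocks A x ↔ Blocks B x) : A = B := by
  rw [← h A hA, ← h B hB, blocker_congr hAB]

theorem exists_blocks (h : StrongBlockerDuality P) (hA : IsAnti A) : ∃ x, Blocks A x := by
  have blocker_nonempty : (blocker A).Nonempty := by
    rw [Set.nonempty_iff_ne_empty]
    intro hempty
    have hA_eq : {⊥} = A := by rw [← blocker_empty, ← hempty, h A hA]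
    exact hA.2.1 (hA_eq ▸ Set.mem_singleton ⊥)
  rw [blocker_eq_setOf_minimal] at blocker_nonempty
  exact blocker_nonempty.imp fun _ hx => hx.prop

theorem isAtomic (h : StrongBlockerDuality P) : IsAtomic P where
  eq_bot_or_exists_atom_le x := by
    rw [or_iff_not_imp_left]
    intro hx
    obtain ⟨y, hy⟩ := h.exists_blocks (isAnti_singleton hx)
    exact (blocks_singleton_iff.1 hy).mono Set.inter_subset_right

theorem exists_blocks_disjoint_atomsBelow (h : StrongBlockerDuality P) (hA : IsAnti A)
    (hinsert : IsAnti (insert x A)) (hx : x ∉ A) :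
    ∃ y, Blocks A y ∧ Disjoint (atomsBelow y) (atomsBelow x) := by
  by_contra! hmeet
  have heq : A = insert x A := h.eq_of_blocks_iff hA hinsert fun y => by
    rw [blocks_insert_iff, iff_and_self, ← Set.not_disjoint_iff_nonempty_inter]
    exact hmeet y
  exact hx (heq ▸ Set.mem_insert x A)

theorem atomsBelow_subset_iff (h : StrongBlockerDuality P) :
    atomsBelow x ⊆ atomsBelow y ↔ x ≤ y := by
  refine ⟨fun hsub => ?_, atomsBelow_mono⟩
  have := h.isAtomic
  by_contra hxy
  have hx : x ≠ ⊥ := fun hx => hxy (hx ▸ bot_le)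
  have hy : y ≠ ⊥ := by
    rintro rfl
    exact (atomsBelow_nonempty hx).not_subset_empty (atomsBelow_bot (P := P) ▸ hsub)
  by_cases hyx : y ≤ x
  · have hatoms : atomsBelow x = atomsBelow y := hsub.antisymm (atomsBelow_mono hyx)
    have hsingleton : ({x} : Set P) = {y} :=
      h.eq_of_blocks_iff (isAnti_singleton hx) (isAnti_singleton hy) fun z => by
        rw [blocks_singleton_iff, blocks_singleton_iff, hatoms]
    exact hxy (Set.singleton_injective hsingleton).le
  · have hpair : IsAnti {y, x} := (isAnti_singleton hx).insert hy
      (fun a ha => ha ▸ hyx) (fun a ha => ha ▸ hxy)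
    obtain ⟨z, hz, hdisj⟩ := h.exists_blocks_disjoint_atomsBelow (isAnti_singleton hx) hpair
      fun hmem => hxy (Set.mem_singleton_iff.1 hmem).ge
    exact Set.not_disjoint_iff_nonempty_inter.2 (blocks_singleton_iff.1 hz)
      (hdisj.mono_right hsub)

theorem exists_atomsBelow_eq_sdiff (h : StrongBlockerDuality P) (x : P) :
    ∃ y, atomsBelow y = {a | IsAtom a} \ atomsBelow x := by
  set A : Set P := {a | IsAtom a} \ atomsBelow x
  have hatom : ∀ a ∈ A, IsAtom a := fun a ha => ha.1
  have hAx : ∀ a ∈ A, ¬ a ≤ x := fun a ha hax => ha.2 ⟨ha.1, hax⟩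
  obtain hempty | hne := A.eq_empty_or_nonempty
  · exact ⟨⊥, atomsBelow_bot.trans hempty.symm⟩
  have hA : IsAnti A := isAnti_of_isAtom hne hatom
  suffices ∃ y, Blocks A y ∧ Disjoint (atomsBelow y) (atomsBelow x) by
    obtain ⟨y, hy, hdisj⟩ := this
    exact ⟨y, Set.Subset.antisymm (Set.subset_sdiff.2 ⟨fun l hl => hl.1, hdisj⟩)
      ((blocks_iff_subset_of_isAtom hatom).1 hy)⟩
  by_cases hx : x = ⊥
  · obtain ⟨y, hy⟩ := h.exists_blocks hA
    exact ⟨y, hy, by simp only [hx, atomsBelow_bot, Set.disjoint_empty]⟩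
  · have hxA : ∀ a ∈ A, ¬ x ≤ a := fun a ha hxa =>
      hAx a ha (((hatom a ha).le_iff_eq hx).1 hxa).ge
    exact h.exists_blocks_disjoint_atomsBelow hA (hA.insert hx hxA hAx) fun hmem =>
      hAx x hmem le_rfl

end StrongBlockerDuality

theorem setOf_coe_le_eq_preimage_atomsBelow {P : Type*} [PartialOrder P] [OrderBot P] (x : P) :
    {l : {a : P // IsAtom a} | (l : P) ≤ x} = Subtype.val ⁻¹' atomsBelow x :=
  Set.ext fun l => (and_iff_right l.2).symm

theorem strong_blocker_duality_wellComplemented_general {P : Type*} [PartialOrder P] [OrderBot P]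
    (h : ∀ A : Set P, IsAnti A → blocker (blocker A) = A) :
    (∀ x y : P, x ≤ y ↔
        {l : {a : P // IsAtom a} | (l : P) ≤ x} ⊆ {l : {a : P // IsAtom a} | (l : P) ≤ y}) ∧
      (∃ x : P, {l : {a : P // IsAtom a} | (l : P) ≤ x} = ∅) ∧
      (∀ l₀ : {a : P // IsAtom a}, ∃ x : P, {l : {a : P // IsAtom a} | (l : P) ≤ x} = {l₀}) ∧
      (∀ x : P, ∃ y : P,
        {l : {a : P // IsAtom a} | (l : P) ≤ y} = {l : {a : P // IsAtom a} | (l : P) ≤ x}ᶜ) := by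
  have hP : StrongBlockerDuality P := h
  simp only [setOf_coe_le_eq_preimage_atomsBelow]
  refine ⟨fun x y => ?_, ⟨⊥, ?_⟩, fun l₀ => ⟨l₀, ?_⟩, fun x => ?_⟩
  · rw [← hP.atomsBelow_subset_iff, Set.preimage_subset_preimage_iff]
    exact fun l hl => ⟨⟨l, hl.1⟩, rfl⟩
  · rw [atomsBelow_bot, Set.preimage_empty]
  · rw [atomsBelow_of_isAtom l₀.2, ← Set.image_singleton, Subtype.val_injective.preimage_image]
  · obtain ⟨y, hy⟩ := hP.exists_atomsBelow_eq_sdiff x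
    refine ⟨y, ?_⟩
    rw [hy, Set.preimage_sdiff, Set.compl_eq_univ_sdiff]
    exact congrArg (· \ _) (Set.eq_univ_of_forall fun l => l.2)

/-- Theorem 2.4, (1) ⇒ (2): if a finite bounded poset `P` satisfies `A** = A` for all
antichains, then `x ↦ Λ(x)` is a poset isomorphism from `P` onto its image in the
Boolean lattice of subsets of the set `Λ` of atoms, and this image contains `∅` and
all singletons and is closed under complementation; i.e. `P` is isomorphic to a
well-complemented subposet of a Boolean lattice. -/
theorem strong_blocker_duality_wellComplemented {P : Type*}
    [PartialOrder P] [BoundedOrder P] [Fintype P]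
    (h : ∀ A : Set P, IsAnti A → blocker (blocker A) = A) :
    (∀ x y : P, x ≤ y ↔
        {l : {a : P // IsAtom a} | (l : P) ≤ x} ⊆ {l : {a : P // IsAtom a} | (l : P) ≤ y}) ∧
      (∃ x : P, {l : {a : P // IsAtom a} | (l : P) ≤ x} = ∅) ∧
      (∀ l₀ : {a : P // IsAtom a}, ∃ x : P, {l : {a : P // IsAtom a} | (l : P) ≤ x} = {l₀}) ∧
      (∀ x : P, ∃ y : P,
        {l : {a : P // IsAtom a} | (l : P) ≤ y} = {l : {a : P // IsAtom a} | (l : P) ≤ x}ᶜ) :=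
  strong_blocker_duality_wellComplemented_general h
end

section
/- Let λ, μ ∈ P_n be partitions of the number n. There exist set partitions σ, τ ∈ Π_n with shape sh(σ) = λ and sh(τ) = μ such that σ ∧ τ = 0̂ (the partition of [n] into singletons) if and only if the conjugate partition λ' dominates μ, i.e. μ ≤ λ' in the dominance order. -/
open Finset

/-- The partition lattice `Π_n`: set partitions of `{1,…,n}`, ordered by refinement. -/
abbrev SetPart (n : ℕ) := Finpartition (univ : Finset (Fin n))

/-- The shape of a set partition: the number partition formed by its block sizes. -/
def shape {n : ℕ} (σ : SetPart n) : Nat.Partition n where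
  parts := σ.parts.val.map Finset.card
  parts_pos := by
    intro i hi
    simp only [Multiset.mem_map, Finset.mem_val] at hi
    obtain ⟨p, hp, rfl⟩ := hi
    exact Finset.card_pos.mpr (σ.nonempty_of_mem_parts hp)
  parts_sum := by
    have h := σ.sum_card_parts
    rw [Finset.sum] at h
    rw [h, card_univ, Fintype.card_fin]

/-- The sum of the `k` largest parts of a number partition. -/
def topSum {n : ℕ} (μ : Nat.Partition n) (k : ℕ) : ℕ :=
  (((μ.parts.sort (· ≤ ·)).reverse).take k).sum

/-- The `i+1`-st part of the conjugate (transpose) partition `λ'` of `λ`: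
the number of parts of `λ` that are at least `i+1`. -/
def conjPart {n : ℕ} (lam : Nat.Partition n) (i : ℕ) : ℕ :=
  (lam.parts.filter (fun p => i + 1 ≤ p)).card

/-- `μ ≤ λ'` in the dominance order `Dom(n)`, where `λ'` is the conjugate of `λ`:
for every `k`, the sum of the `k` largest parts of `μ` is at most
`λ'_1 + ⋯ + λ'_k` (the parts of the conjugate being arranged decreasingly). -/
def DomLEConj {n : ℕ} (μ lam : Nat.Partition n) : Prop :=
  ∀ k, topSum μ k ≤ ∑ i ∈ Finset.range k, conjPart lam i

/-!
If `σ` and `τ` meet in `0̂`, then `x ↦ (block of σ, block of τ)` is injective, so the union of `k`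
blocks of `τ` meets a block `A` of `σ` in at most `min (#A) k` points. Summing over `A` bounds the
sizes of any `k` blocks of `τ` by `∑ min (λ_i) k = λ'_1 + ⋯ + λ'_k`.

Conversely, an incidence relation between the parts of `λ` and the parts of `μ` whose degrees are
those parts has `n` incident pairs; labelling these by `1, …, n` and grouping them by either
coordinate gives `σ` and `τ`. Such a relation exists by the Gale–Ryser theorem, proved greedily:
give each part of `μ` in turn the parts of `λ` with the largest remaining degrees.
-/

variable {ι κ : Type*}

theorem sum_le_sum_take_of_sublist {α : Type*} [AddMonoid α] [Preorder α] [AddLeftMono α]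
    [AddRightMono α] {l₁ l₂ : List α} (h : l₁.Sublist l₂) (hl₂ : l₂.Pairwise (· ≥ ·)) :
    l₁.sum ≤ (l₂.take l₁.length).sum := by
  induction l₂ generalizing l₁ with
  | nil => simp [List.sublist_nil.mp h]
  | cons a l₂ ih =>
    rw [List.pairwise_cons] at hl₂
    cases l₁ with
    | nil => simp
    | cons b l₁ =>
      have hba : b ≤ a := by
        rcases List.mem_cons.mp (h.subset List.mem_cons_self) with rfl | hb
        · exact le_rfl
        · exact hl₂.1 b hb
      simpa using add_le_add hba (ih h.of_cons_cons hl₂.2)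

theorem sum_le_topSum_card {n : ℕ} {μ : Nat.Partition n} {u : Multiset ℕ} (hu : u ≤ μ.parts) :
    u.sum ≤ topSum μ u.card := by
  have sorted (v : Multiset ℕ) : (v.sort (· ≤ ·)).reverse.Pairwise (· ≥ ·) :=
    List.pairwise_reverse.mpr (v.pairwise_sort (· ≤ ·))
  have coe_sorted (v : Multiset ℕ) : ((v.sort (· ≤ ·)).reverse : Multiset ℕ) = v := by
    rw [Multiset.coe_reverse, Multiset.sort_eq]
  have hsub : (u.sort (· ≤ ·)).reverse.Sublist (μ.parts.sort (· ≤ ·)).reverse := by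
    refine List.sublist_of_subperm_of_pairwise ?_ (sorted u) (sorted μ.parts)
    rwa [← Multiset.coe_le, coe_sorted, coe_sorted]
  simpa [topSum, ← Multiset.sum_coe, coe_sorted] using
    sum_le_sum_take_of_sublist hsub (sorted μ.parts)

theorem exists_le_parts_sum_eq_topSum {n : ℕ} (μ : Nat.Partition n) (k : ℕ) :
    ∃ u ≤ μ.parts, u.card ≤ k ∧ u.sum = topSum μ k := by
  refine ⟨((μ.parts.sort (· ≤ ·)).reverse.take k : List ℕ), ?_, ?_, Multiset.sum_coe _⟩
  · calc (((μ.parts.sort (· ≤ ·)).reverse.take k : List ℕ) : Multiset ℕ)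
        ≤ ((μ.parts.sort (· ≤ ·)).reverse : List ℕ) :=
          Multiset.coe_le.mpr (List.take_sublist _ _).subperm
      _ = μ.parts := by rw [Multiset.coe_reverse, Multiset.sort_eq]
  · simp

theorem sum_range_card_filter_succ_le (s : Multiset ℕ) (k : ℕ) :
    ∑ i ∈ range k, (s.filter (i + 1 ≤ ·)).card = (s.map (min · k)).sum := by
  induction s using Multiset.induction_on with
  | empty => simp
  | cons a s ih =>
    have hmin : #{i ∈ range k | i + 1 ≤ a} = min a k := by
      rw [← card_range (min a k)]
      congr 1
      ext i
      simp only [mem_filter, mem_range]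
      omega
    simp only [← Multiset.countP_eq_card_filter, Multiset.countP_cons] at ih ⊢
    rw [sum_add_distrib, ih, ← card_filter, hmin, Multiset.map_cons, Multiset.sum_cons, add_comm]

theorem exists_subset_map_val_eq {α β : Type*} {t : Finset α} {f : α → β} {u : Multiset β}
    (hu : u ≤ t.val.map f) : ∃ T ⊆ t, T.val.map f = u := by
  have hmem : u ∈ Multiset.powersetCard u.card (t.val.map f) :=
    Multiset.mem_powersetCard.mpr ⟨hu, rfl⟩
  rw [Multiset.powersetCard_map, Multiset.mem_map] at hmem
  obtain ⟨v, hv, rfl⟩ := hmem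
  have hvt : v ≤ t.val := (Multiset.mem_powersetCard.mp hv).1
  exact ⟨⟨v, Multiset.nodup_of_le hvt t.nodup⟩, val_le_iff.mp hvt, rfl⟩

theorem domLEConj_iff_forall_sum_le_sum_min {n : ℕ} {lam mu : Nat.Partition n} {s : Finset ι}
    {t : Finset κ} {r : ι → ℕ} {c : κ → ℕ} (hr : s.val.map r = lam.parts)
    (hc : t.val.map c = mu.parts) :
    DomLEConj mu lam ↔ ∀ T ⊆ t, ∑ j ∈ T, c j ≤ ∑ i ∈ s, min (r i) #T := by
  have sum_conjPart (k : ℕ) : ∑ i ∈ range k, conjPart lam i = ∑ i ∈ s, min (r i) k := by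
    calc ∑ i ∈ range k, conjPart lam i = (lam.parts.map (min · k)).sum :=
          sum_range_card_filter_succ_le lam.parts k
      _ = ∑ i ∈ s, min (r i) k := by rw [← hr, Multiset.map_map]; rfl
  simp only [DomLEConj, sum_conjPart]
  constructor
  · intro h T hT
    have hle : T.val.map c ≤ mu.parts := hc ▸ Multiset.map_le_map (val_le_iff.mpr hT)
    simpa using (sum_le_topSum_card hle).trans (h _)
  · intro h k
    obtain ⟨u, hu, huk, hsum⟩ := exists_le_parts_sum_eq_topSum mu k
    obtain ⟨T, hT, rfl⟩ := exists_subset_map_val_eq (hu.trans_eq hc.symm)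
    rw [Multiset.card_map] at huk
    calc topSum mu k = ∑ j ∈ T, c j := hsum.symm
      _ ≤ ∑ i ∈ s, min (r i) #T := h T hT
      _ ≤ ∑ i ∈ s, min (r i) k := sum_le_sum fun i _ => min_le_min_left (r i) huk

theorem sum_card_fiber_le_sum_min {α : Type*} [DecidableEq ι] [DecidableEq κ] {s : Finset α}
    {I : Finset ι} {f : α → ι} {g : α → κ} (hf : Set.MapsTo f s I)
    (hfg : Set.InjOn (fun x => (f x, g x)) s) (T : Finset κ) :
    ∑ j ∈ T, #{x ∈ s | g x = j} ≤ ∑ i ∈ I, min #{x ∈ s | f x = i} #T := by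
  rw [sum_card_fiberwise_eq_card_filter,
    card_eq_sum_card_fiberwise (hf.mono_left (coe_subset.mpr (filter_subset _ s)))]
  refine sum_le_sum fun i _ => le_min (card_le_card ?_) (card_le_card_of_injOn g ?_ ?_)
  · exact filter_subset_filter _ (filter_subset _ s)
  · exact fun x hx => (mem_filter.mp (mem_filter.mp hx).1).2
  · intro x hx y hy hxy
    simp only [coe_filter, mem_filter, Set.mem_ofPred_eq] at hx hy
    exact hfg hx.1.1 hy.1.1 (Prod.ext (hx.2.trans hy.2.symm) hxy)

section Finpartition

variable {α : Type*} [DecidableEq α] {s : Finset α} {σ τ : Finpartition s}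

theorem finpartition_part_inf (x : α) : (σ ⊓ τ).part x = σ.part x ∩ τ.part x := by
  ext y
  simp only [mem_inter, Finpartition.mem_part_iff_exists, Finpartition.parts_inf, mem_erase,
    mem_image, mem_product]
  constructor
  · rintro ⟨_, ⟨-, ⟨A, B⟩, ⟨hA, hB⟩, rfl⟩, hy, hx⟩
    obtain ⟨hyA, hyB⟩ := mem_inter.mp hy
    obtain ⟨hxA, hxB⟩ := mem_inter.mp hx
    exact ⟨⟨A, hA, hyA, hxA⟩, B, hB, hyB, hxB⟩
  · rintro ⟨⟨A, hA, hyA, hxA⟩, B, hB, hyB, hxB⟩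
    have hy : y ∈ A ∩ B := mem_inter.mpr ⟨hyA, hyB⟩
    exact ⟨A ∩ B, ⟨ne_empty_of_mem hy, (A, B), ⟨hA, hB⟩, rfl⟩, hy, mem_inter.mpr ⟨hxA, hxB⟩⟩

theorem finpartition_eq_bot_iff_injOn_part : σ = ⊥ ↔ Set.InjOn σ.part s := by
  constructor
  · rintro rfl x hx y hy hxy
    have hmem : x ∈ (⊥ : Finpartition s).part y :=
      ((⊥ : Finpartition s).mem_part_iff_part_eq_part hx hy).mpr hxy
    obtain ⟨_, hp, hxp, hyp⟩ := Finpartition.mem_part_iff_exists _ |>.mp hmem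
    obtain ⟨a, -, rfl⟩ := Finpartition.mem_bot_iff.mp hp
    exact (mem_singleton.mp hxp).trans (mem_singleton.mp hyp).symm
  · intro h
    rw [← le_bot_iff]
    intro A hA
    obtain ⟨x, hx⟩ := σ.nonempty_of_mem_parts hA
    have hxs : x ∈ s := σ.subset hA hx
    refine ⟨{x}, Finpartition.mem_bot_iff.mpr ⟨x, hxs, rfl⟩, fun y hy => mem_singleton.mpr ?_⟩
    exact h (σ.subset hA hy) hxs
      ((σ.part_eq_of_mem hA hy).trans (σ.part_eq_of_mem hA hx).symm)

theorem finpartition_inf_eq_bot_iff_injOn_part :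
    σ ⊓ τ = ⊥ ↔ Set.InjOn (fun x => (σ.part x, τ.part x)) s := by
  rw [finpartition_eq_bot_iff_injOn_part]
  refine ⟨fun h x hx y hy hxy => ?_, fun h x hx y hy hxy => ?_⟩
  · obtain ⟨hσ, hτ⟩ := Prod.mk.inj hxy
    exact h hx hy (by rw [finpartition_part_inf, finpartition_part_inf, hσ, hτ])
  · have hmem : x ∈ σ.part y ∩ τ.part y := by
      rw [← finpartition_part_inf]
      exact ((σ ⊓ τ).mem_part_iff_part_eq_part hx hy).mpr hxy
    obtain ⟨hσ, hτ⟩ := mem_inter.mp hmem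
    exact h hx hy (Prod.ext ((σ.mem_part_iff_part_eq_part hx hy).mp hσ)
      ((τ.mem_part_iff_part_eq_part hx hy).mp hτ))

end Finpartition

theorem domLEConj_shape_of_inf_eq_bot {n : ℕ} {σ τ : SetPart n} (h : σ ⊓ τ = ⊥) :
    DomLEConj (shape τ) (shape σ) := by
  have card_fiber (ρ : SetPart n) {A : Finset (Fin n)} (hA : A ∈ ρ.parts) :
      #{x | ρ.part x = A} = #A := by
    simp [ρ.part_eq_iff_mem hA]
  rw [domLEConj_iff_forall_sum_le_sum_min (s := σ.parts) (t := τ.parts) rfl rfl]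
  intro T hT
  calc ∑ B ∈ T, #B = ∑ B ∈ T, #{x | τ.part x = B} :=
        sum_congr rfl fun B hB => (card_fiber τ (hT hB)).symm
    _ ≤ ∑ A ∈ σ.parts, min #{x | σ.part x = A} #T :=
        sum_card_fiber_le_sum_min (fun x hx => σ.part_mem.mpr hx)
          (finpartition_inf_eq_bot_iff_injOn_part.mp h) T
    _ = ∑ A ∈ σ.parts, min #A #T := sum_congr rfl fun A hA => by rw [card_fiber σ hA]

/-- The 0-1 matrix with row set `ι` and column set `t` has row sums `r` and column sums `c`.
The matrix is encoded by its columns: `M j` is the set of rows with an entry `1` in column `j`. -/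
def HasMargins [DecidableEq ι] (M : κ → Finset ι) (t : Finset κ) (r : ι → ℕ) (c : κ → ℕ) :
    Prop :=
  (∀ i, #{j ∈ t | i ∈ M j} = r i) ∧ ∀ j ∈ t, #(M j) = c j

theorem exists_subset_card_eq_forall_mem_sdiff_le {α : Type*} [DecidableEq ι] [LinearOrder α]
    (r : ι → α) {A : Finset ι} {m : ℕ} (hm : m ≤ #A) :
    ∃ S ⊆ A, #S = m ∧ ∀ i ∈ S, ∀ i' ∈ A \ S, r i' ≤ r i := by
  induction m with
  | zero => exact ⟨∅, by simp⟩
  | succ m ih =>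
    obtain ⟨S, hSA, rfl, htop⟩ := ih (Nat.le_of_succ_le hm)
    have hne : (A \ S).Nonempty := by
      rw [sdiff_nonempty]
      exact fun hAS => hm.not_gt (Nat.lt_succ_of_le (card_le_card hAS))
    obtain ⟨a, ha, hmax⟩ := exists_max_image (A \ S) r hne
    obtain ⟨haA, haS⟩ := mem_sdiff.mp ha
    refine ⟨insert a S, insert_subset haA hSA, card_insert_of_notMem haS, fun i hi i' hi' => ?_⟩
    have hi'S : i' ∈ A \ S := sdiff_subset_sdiff le_rfl (subset_insert a S) hi'
    rcases mem_insert.mp hi with rfl | hi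
    · exact hmax i' hi'S
    · exact htop i hi i' hi'S

namespace HasMargins

variable [DecidableEq ι] {M : κ → Finset ι} {r : ι → ℕ} {c : κ → ℕ}

theorem update [DecidableEq κ] {t : Finset κ} {a : κ} {S : Finset ι} (hM : HasMargins M t r c)
    (ha : a ∉ t) (hS : #S = c a) :
    HasMargins (Function.update M a S) (insert a t) (fun i => r i + if i ∈ S then 1 else 0) c := by
  have update_eq {j : κ} (hj : j ∈ t) : Function.update M a S j = M j :=
    Function.update_of_ne (ne_of_mem_of_not_mem hj ha) _ _
  constructor
  · intro i
    have hfilter : {j ∈ t | i ∈ Function.update M a S j} = {j ∈ t | i ∈ M j} :=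
      filter_congr fun j hj => by rw [update_eq hj]
    rw [filter_insert, hfilter, Function.update_self]
    by_cases hi : i ∈ S
    · simp [hi, ha, hM.1 i]
    · simp [hi, hM.1 i]
  · intro j hj
    rcases mem_insert.mp hj with rfl | hj
    · rw [Function.update_self, hS]
    · rw [update_eq hj, hM.2 j hj]

theorem exists_injective_prodMk_card_fiber_eq [Fintype κ] [DecidableEq κ] {α : Type*} [Fintype α]
    (hM : HasMargins M univ r c) (hα : ∑ j, c j = Fintype.card α) :
    ∃ (f : α → ι) (g : α → κ), Function.Injective (fun x => (f x, g x)) ∧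
      (∀ i, #{x | f x = i} = r i) ∧ ∀ j, #{x | g x = j} = c j := by
  have hcard : Fintype.card (Σ j, M j) = Fintype.card α := by
    rw [Fintype.card_sigma, ← hα]
    exact sum_congr rfl fun j hj => (Fintype.card_coe (M j)).trans (hM.2 j hj)
  let e : (Σ j, M j) ≃ α := Fintype.equivOfCardEq hcard
  refine ⟨fun x => (e.symm x).2, fun x => (e.symm x).1, fun x y hxy => ?_, fun i => ?_, fun j => ?_⟩
  · obtain ⟨hf, hg⟩ := Prod.mk.inj hxy
    exact e.symm.injective (Sigma.subtype_ext hg hf)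
  · rw [← hM.1 i]
    refine card_bij (fun x _ => (e.symm x).1) (fun x hx => ?_) (fun x hx y hy hxy => ?_)
      fun j hj => ⟨e ⟨j, i, (mem_filter.mp hj).2⟩, mem_filter.mpr ⟨mem_univ _, ?_⟩, ?_⟩
    · rw [← (mem_filter.mp hx).2]
      exact mem_filter.mpr ⟨mem_univ _, (e.symm x).2.2⟩
    · exact e.symm.injective
        (Sigma.subtype_ext hxy ((mem_filter.mp hx).2.trans (mem_filter.mp hy).2.symm))
    all_goals beta_reduce; rw [e.symm_apply_apply]
  · rw [← hM.2 j (mem_univ j)]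
    refine card_bij (fun x _ => (e.symm x).2) (fun x hx => ?_) (fun x hx y hy hxy => ?_)
      fun i hi => ⟨e ⟨j, i, hi⟩, mem_filter.mpr ⟨mem_univ _, ?_⟩, ?_⟩
    · rw [← (mem_filter.mp hx).2]
      exact (e.symm x).2.2
    · exact e.symm.injective
        (Sigma.subtype_ext ((mem_filter.mp hx).2.trans (mem_filter.mp hy).2.symm) hxy)
    all_goals beta_reduce; rw [e.symm_apply_apply]

end HasMargins

theorem le_sum_min_of_le_sum_min_add [Fintype ι] [DecidableEq ι] {r : ι → ℕ} {S : Finset ι}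
    {b k : ℕ} (htop : ∀ i ∈ S, ∀ i' ∉ S, r i' ≤ r i + 1)
    (hk : b ≤ ∑ i, min (r i + if i ∈ S then 1 else 0) k)
    (hk_succ : b + #S ≤ ∑ i, min (r i + if i ∈ S then 1 else 0) (k + 1)) :
    b ≤ ∑ i, min (r i) k := by
  -- Lowering the entries over `S` by one leaves the sum of minima with `k` unchanged if some entry
  -- outside `S`, and hence every raised entry over `S`, exceeds `k`.
  by_cases hlarge : ∃ i₀ ∉ S, k < r i₀
  · obtain ⟨i₀, hi₀, hk₀⟩ := hlarge
    refine hk.trans_eq (sum_congr rfl fun i _ => ?_)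
    split_ifs with hi
    · have := htop i hi i₀ hi₀
      omega
    · rfl
  · push Not at hlarge
    have hle : ∑ i, min (r i + if i ∈ S then 1 else 0) (k + 1) ≤ ∑ i, min (r i) k + #S := by
      have hS : #S = ∑ i, if i ∈ S then 1 else 0 := by simp
      rw [hS, ← sum_add_distrib]
      refine sum_le_sum fun i _ => ?_
      split_ifs with hi
      · omega
      · have := hlarge i hi
        omega
    omega

/-- The sufficiency half of the Gale–Ryser theorem. -/
theorem exists_hasMargins [Fintype ι] [DecidableEq ι] {t : Finset κ} {r : ι → ℕ} {c : κ → ℕ}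
    (hsum : ∑ j ∈ t, c j = ∑ i, r i)
    (hdom : ∀ T ⊆ t, ∑ j ∈ T, c j ≤ ∑ i, min (r i) #T) : ∃ M, HasMargins M t r c := by
  classical
  induction t using Finset.induction_on generalizing r with
  | empty =>
    have hr : ∀ i, r i = 0 := by simpa [eq_comm] using hsum
    exact ⟨fun _ => ∅, by simp [hr], by simp⟩
  | insert a t ha ih =>
    have hcard : c a ≤ #{i | 0 < r i} := by
      have hmin (i : ι) : min (r i) 1 = if 0 < r i then 1 else 0 := by split_ifs <;> omega
      simpa [hmin] using hdom {a} (by simp)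
    obtain ⟨S, hSr, hS, htop⟩ := exists_subset_card_eq_forall_mem_sdiff_le r hcard
    obtain ⟨r, rfl⟩ : ∃ r' : ι → ℕ, r = fun i => r' i + if i ∈ S then 1 else 0 := by
      refine ⟨fun i => r i - if i ∈ S then 1 else 0, funext fun i => ?_⟩
      by_cases hi : i ∈ S
      · have hpos : 0 < r i := (mem_filter.mp (hSr hi)).2
        simp only [hi, if_true]
        omega
      · simp [hi]
    have htop' : ∀ i ∈ S, ∀ i' ∉ S, r i' ≤ r i + 1 := by
      intro i hi i' hi'
      rcases Nat.eq_zero_or_pos (r i') with hzero | hpos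
      · simp [hzero]
      · simpa [hi, hi'] using htop i hi i' (by simp [hi', hpos])
    obtain ⟨M, hM⟩ := ih (r := r)
      (by simpa [sum_insert ha, sum_add_distrib, hS, add_comm] using hsum)
      (fun T hT => le_sum_min_of_le_sum_min_add htop' (hdom T (hT.trans (subset_insert a t))) (by
        have haT : a ∉ T := fun h => ha (hT h)
        simpa [haT, hS, add_comm] using hdom (insert a T) (insert_subset_insert a hT)))
    exact ⟨Function.update M a S, hM.update ha hS⟩

section FiberPartition

variable {α : Type*} [Fintype α] [DecidableEq α] [DecidableEq ι]

/-- The set partition of `α` whose blocks are the nonempty fibres of `f`, which turns a labelling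
of the points by blocks into a set partition. -/
def fiberPartition (f : α → ι) : Finpartition (univ : Finset α) :=
  Finpartition.ofSetoid (Setoid.ker f)

theorem fiberPartition_part_eq_part_iff {f : α → ι} {x y : α} :
    (fiberPartition f).part x = (fiberPartition f).part y ↔ f x = f y := by
  rw [← Finpartition.mem_part_iff_part_eq_part _ (mem_univ x) (mem_univ y), fiberPartition,
    Finpartition.mem_part_ofSetoid_iff_rel, Setoid.ker_def, eq_comm]

theorem fiberPartition_inf_eq_bot_iff [DecidableEq κ] {f : α → ι} {g : α → κ} :
    fiberPartition f ⊓ fiberPartition g = ⊥ ↔ Function.Injective fun x => (f x, g x) := by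
  simp only [finpartition_inf_eq_bot_iff_injOn_part, coe_univ, Set.injOn_univ, Function.Injective,
    Prod.mk.injEq, fiberPartition_part_eq_part_iff]

theorem parts_fiberPartition [Fintype ι] {f : α → ι} (hf : Function.Surjective f) :
    (fiberPartition f).parts = univ.image fun i => ({x | f x = i} : Finset α) := by
  have hparts : (fiberPartition f).parts =
      univ.image ((fun i => ({x | i = f x} : Finset α)) ∘ f) := rfl
  rw [hparts, ← image_image, image_univ_of_surjective hf]
  simp only [eq_comm]

theorem parts_shape_fiberPartition {n : ℕ} [Fintype ι] {f : Fin n → ι}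
    (hf : Function.Surjective f) :
    (shape (fiberPartition f)).parts = univ.val.map fun i => #{x | f x = i} := by
  have fiber_injective : Function.Injective fun i => ({x | f x = i} : Finset (Fin n)) := by
    intro i j hij
    obtain ⟨x, rfl⟩ := hf i
    simpa using Finset.ext_iff.mp hij x
  calc (shape (fiberPartition f)).parts = (fiberPartition f).parts.val.map card := rfl
    _ = univ.val.map fun i => #{x | f x = i} := by
      rw [parts_fiberPartition hf, image_val_of_injOn fiber_injective.injOn, Multiset.map_map]
      rfl

theorem shape_fiberPartition_eq {n : ℕ} [Fintype ι] {ν : Nat.Partition n}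
    {r : ι → ℕ} (hr : univ.val.map r = ν.parts) {f : Fin n → ι}
    (hf : ∀ i, #{x | f x = i} = r i) : shape (fiberPartition f) = ν := by
  have hsurj : Function.Surjective f := by
    intro i
    have hpos : 0 < #{x | f x = i} := by
      rw [hf i]
      exact ν.parts_pos (hr ▸ Multiset.mem_map_of_mem r (mem_univ_val i))
    simpa [card_pos, filter_nonempty_iff] using hpos
  refine Nat.Partition.ext ?_
  rw [parts_shape_fiberPartition hsurj, ← hr]
  simp only [hf]

end FiberPartition

/-- There are set partitions `σ, τ ∈ Π_n` of shapes `λ` and `μ` with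
`σ ∧ τ = 0̂` if and only if the conjugate `λ'` dominates `μ`. -/
theorem exists_shapes_meet_bot_iff (n : ℕ) (lam mu : Nat.Partition n) :
    (∃ σ τ : SetPart n, shape σ = lam ∧ shape τ = mu ∧ σ ⊓ τ = ⊥) ↔
      DomLEConj mu lam := by
  constructor
  · rintro ⟨σ, τ, rfl, rfl, h⟩
    exact domLEConj_shape_of_inf_eq_bot h
  · classical
    intro h
    let r : lam.parts → ℕ := fun i => i
    let c : mu.parts → ℕ := fun j => j
    have hr : univ.val.map r = lam.parts := lam.parts.map_univ_coe
    have hc : univ.val.map c = mu.parts := mu.parts.map_univ_coe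
    have hr_sum : ∑ i, r i = n := by rw [sum_eq_multiset_sum, hr, lam.parts_sum]
    have hc_sum : ∑ j, c j = n := by rw [sum_eq_multiset_sum, hc, mu.parts_sum]
    obtain ⟨M, hM⟩ := exists_hasMargins (hc_sum.trans hr_sum.symm)
      ((domLEConj_iff_forall_sum_le_sum_min hr hc).mp h)
    obtain ⟨f, g, hfg, hf, hg⟩ :=
      hM.exists_injective_prodMk_card_fiber_eq (hc_sum.trans (Fintype.card_fin n).symm)
    exact ⟨fiberPartition f, fiberPartition g, shape_fiberPartition_eq hr hf,
      shape_fiberPartition_eq hc hg, fiberPartition_inf_eq_bot_iff.mpr hfg⟩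
end

section
/- Let A be any S_n-invariant antichain in the partition lattice Π_n. Then the blocker A* contains the hook-shape antichain fi((p, 1^{n-p})) for some p, i.e. A* ⊇ fi((p, 1^{n-p})) for some 2 ≤ p ≤ n. -/
open Finset

/-- The fiber under the shape map of a set `S` of number partitions: all set
partitions whose shape lies in `S`. -/
def fi {n : ℕ} (S : Set (Nat.Partition n)) : Set (SetPart n) :=
  {σ | shape σ ∈ S}

/-- The hook-shaped number partition `(p, 1^{n-p})`: one part equal to `p` and
`n - p` parts equal to `1`. -/
def hook (n p : ℕ) (hp : 0 < p) (hpn : p ≤ n) : Nat.Partition n where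
  parts := p ::ₘ Multiset.replicate (n - p) 1
  parts_pos := by
    intro i hi
    simp only [Multiset.mem_cons, Multiset.mem_replicate] at hi
    rcases hi with rfl | ⟨-, rfl⟩
    · exact hp
    · exact one_pos
  parts_sum := by
    simp only [Multiset.sum_cons, Multiset.sum_replicate, smul_eq_mul, mul_one]
    omega

/-- The action of a permutation of `{1,…,n}` on set partitions of `{1,…,n}`. -/
def permAct {n : ℕ} (g : Equiv.Perm (Fin n)) (σ : SetPart n) : SetPart n :=
  (σ.map (g.finsetCongr.toOrderIso
      (fun s t h => by
        simp only [Equiv.finsetCongr_apply]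
        exact Finset.map_subset_map.2 h)
      (fun s t h => by
        simp only [Equiv.finsetCongr_symm, Equiv.finsetCongr_apply]
        exact Finset.map_subset_map.2 h))).copy
    (Finset.map_univ_equiv g)

/-- A set of set partitions is `S_n`-invariant if it is closed under the action of
the symmetric group `S_n` on `Π_n`. -/
def SnInvariant {n : ℕ} (A : Set (SetPart n)) : Prop :=
  ∀ g : Equiv.Perm (Fin n), ∀ σ ∈ A, permAct g σ ∈ A

/-!
Two set partitions lie above a common atom exactly when they are not disjoint, that is, when both
identify some pair of distinct points; say then that they meet. Let `a ∈ A` have the largest number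
`k` of blocks in `A`, and let `x` have a single nontrivial block `B`, of size `k + 1`. By the
pigeonhole principle, every member of `A` identifies two points of `B`, so `x` meets every member of
`A`. Conversely, since `a ≠ ⊥`, a transversal of `a` can be enlarged to a `(k + 1)`-set on which `a`
identifies a single pair. Moving this set onto `B` so that the pair goes to a given pair `{u, v}`
yields, by invariance, a member of `A` that identifies only `u` and `v` within `B`. Hence a
partition `y ≤ x` that meets every member of `A` must identify every pair of points of `B`, so
`y = x`.
-/

lemma exists_isAtom_le_le_iff_not_disjoint {P : Type*} [PartialOrder P] [OrderBot P] [IsAtomic P]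
    {x a : P} : (∃ l, IsAtom l ∧ l ≤ x ∧ l ≤ a) ↔ ¬Disjoint x a := by
  refine ⟨fun ⟨l, hl, hlx, hla⟩ hdisj ↦ hl.1 (le_bot_iff.1 (hdisj hlx hla)), fun h ↦ ?_⟩
  simp only [Disjoint, not_forall, le_bot_iff] at h
  obtain ⟨z, hzx, hza, hz⟩ := h
  obtain ⟨l, hl, hlz⟩ := (eq_bot_or_exists_atom_le z).resolve_left hz
  exact ⟨l, hl, hlz.trans hzx, hlz.trans hza⟩

lemma mem_blocker_iff_minimal_s13 {P : Type*} [PartialOrder P] [OrderBot P] [IsAtomic P]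
    {A : Set P} {x : P} : x ∈ blocker A ↔ Minimal (fun y ↦ ∀ a ∈ A, ¬Disjoint y a) x := by
  simp only [blocker, Set.mem_ofPred_eq, exists_isAtom_le_le_iff_not_disjoint, minimal_iff]
  grind

section Finpartition

variable {α : Type*} [DecidableEq α] {s : Finset α} {P Q : Finpartition s} {a b : α}

lemma mem_part_comm : b ∈ P.part a ↔ a ∈ P.part b := by
  simp only [Finpartition.mem_part_iff_exists, and_comm]

lemma le_iff_part_subset_part : P ≤ Q ↔ ∀ a, P.part a ⊆ Q.part a := by
  refine ⟨fun h a b hb ↦ ?_, fun h p hp ↦ ?_⟩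
  · obtain ⟨p, hp, hbp, hap⟩ := P.mem_part_iff_exists.1 hb
    obtain ⟨q, hq, hpq⟩ := h hp
    exact Q.mem_part_iff_exists.2 ⟨q, hq, hpq hbp, hpq hap⟩
  · obtain ⟨a, ha⟩ := P.nonempty_of_mem_parts hp
    exact ⟨Q.part a, Q.part_mem.2 (P.subset hp ha), P.part_eq_of_mem hp ha ▸ h a⟩

lemma mem_part_bot : b ∈ (⊥ : Finpartition s).part a ↔ a ∈ s ∧ a = b := by
  simp only [Finpartition.mem_part_iff_exists, Finpartition.mem_bot_iff]
  grind

lemma part_inf_eq_inter : (P ⊓ Q).part a = P.part a ∩ Q.part a := by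
  ext b
  simp only [mem_inter, Finpartition.mem_part_iff_exists, Finpartition.parts_inf, mem_erase,
    mem_image, mem_product, Prod.exists]
  constructor
  · rintro ⟨_, ⟨-, p, q, ⟨hp, hq⟩, rfl⟩, hb, ha⟩
    exact ⟨⟨p, hp, inter_subset_left hb, inter_subset_left ha⟩,
      q, hq, inter_subset_right hb, inter_subset_right ha⟩
  · rintro ⟨⟨p, hp, hbp, hap⟩, q, hq, hbq, haq⟩
    have ha : a ∈ p ∩ q := mem_inter.2 ⟨hap, haq⟩
    exact ⟨p ∩ q, ⟨ne_empty_of_mem ha, p, q, ⟨hp, hq⟩, rfl⟩, mem_inter.2 ⟨hbp, hbq⟩, ha⟩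

lemma not_disjoint_iff_exists_mem_part :
    ¬Disjoint P Q ↔ ∃ a b, a ≠ b ∧ b ∈ P.part a ∧ b ∈ Q.part a := by
  rw [disjoint_iff_inf_le, le_iff_part_subset_part]
  simp only [part_inf_eq_inter, subset_iff, mem_inter, mem_part_bot]
  have mem_of_mem_part {a b : α} (hb : b ∈ P.part a) : a ∈ s := P.part_nonempty.1 ⟨b, hb⟩
  grind

lemma ne_bot_iff_exists_mem_part : P ≠ ⊥ ↔ ∃ a b, a ≠ b ∧ b ∈ P.part a := by
  rw [Ne, ← disjoint_self, not_disjoint_iff_exists_mem_part]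
  simp only [and_self]

lemma not_disjoint_of_card_parts_lt_card {B : Finset α} (hB : B ∈ P.parts)
    (hlt : #Q.parts < #B) : ¬Disjoint P Q := by
  have hBs {i : α} (hi : i ∈ B) : i ∈ s := P.subset hB hi
  obtain ⟨i, hi, j, hj, hij, heq⟩ := exists_ne_map_eq_of_card_lt_of_maps_to hlt
    (f := Q.part) fun i hi ↦ Q.part_mem.2 (hBs hi)
  exact not_disjoint_iff_exists_mem_part.2
    ⟨i, j, hij, (P.part_eq_of_mem hB hi).symm ▸ hj, heq ▸ Q.mem_part (hBs hj)⟩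

lemma exists_transversal_mem (ha : a ∈ s) :
    ∃ R ⊆ s, #R = #P.parts ∧ a ∈ R ∧ Set.InjOn P.part R := by
  obtain ⟨R, haR, hRs, hR⟩ := (Set.injOn_singleton P.part a).bijOn_image.exists_extend_of_subset
    (Set.singleton_subset_iff.2 (mem_coe.2 ha))
    (by simpa only [Set.image_singleton, Set.singleton_subset_iff] using! P.part_mem.2 ha)
    P.part_surjOn
  lift R to Finset α using s.finite_toSet.subset hRs
  exact ⟨R, mod_cast hRs, hR.finsetCard_eq, Set.singleton_subset_iff.1 haR, hR.injOn⟩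

lemma exists_card_eq_card_parts_add_one_of_mem_part (hab : a ≠ b) (hb : b ∈ P.part a) :
    ∃ T ⊆ s, #T = #P.parts + 1 ∧ a ∈ T ∧ b ∈ T ∧
      ∀ i ∈ T, ∀ j ∈ T, i ≠ j → j ∈ P.part i → s(i, j) = s(a, b) := by
  have has : a ∈ s := P.part_nonempty.1 ⟨b, hb⟩
  have hbs : b ∈ s := P.part_subset a hb
  obtain ⟨R, hRs, hcard, haR, hinj⟩ := exists_transversal_mem (P := P) has
  have part_eq {i j : α} (h : j ∈ P.part i) : P.part j = P.part i :=
    P.part_eq_of_mem (P.part_mem.2 (P.part_nonempty.1 ⟨j, h⟩)) h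
  have eq_of_mem {i : α} (hi : i ∈ R) (h : P.part i = P.part b) : i = a :=
    hinj hi haR (h.trans (part_eq hb))
  have hbR : b ∉ R := fun hbR ↦ hab (eq_of_mem hbR rfl).symm
  refine ⟨insert b R, insert_subset hbs hRs, by rw [card_insert_of_notMem hbR, hcard],
    mem_insert_of_mem haR, mem_insert_self b R, fun i hi j hj hij hji ↦ ?_⟩
  rcases mem_insert.1 hi with rfl | hiR <;> rcases mem_insert.1 hj with rfl | hjR
  · exact absurd rfl hij
  · rw [eq_of_mem hjR (part_eq hji), Sym2.eq_swap]
  · rw [eq_of_mem hiR (part_eq hji).symm]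
  · exact absurd (hinj hiR hjR (part_eq hji).symm) hij

lemma card_parts_lt_card_of_ne_bot (hP : P ≠ ⊥) : #P.parts < #s := by
  obtain ⟨a, b, hab, hb⟩ := ne_bot_iff_exists_mem_part.1 hP
  obtain ⟨T, hTs, hcard, -⟩ := exists_card_eq_card_parts_add_one_of_mem_part hab hb
  have hTs' : #T ≤ #s := card_le_card hTs
  omega

lemma card_parts_pos_of_ne_bot (hP : P ≠ ⊥) : 0 < #P.parts := by
  obtain ⟨a, b, -, hb⟩ := ne_bot_iff_exists_mem_part.1 hP
  exact card_pos.2 ⟨_, P.part_mem.2 (P.part_nonempty.1 ⟨b, hb⟩)⟩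

lemma mem_and_mem_of_mem_part_of_forall_card_eq_one {B : Finset α}
    (hP : ∀ C ∈ P.parts, C ≠ B → #C = 1) (hab : a ≠ b) (hb : b ∈ P.part a) : a ∈ B ∧ b ∈ B := by
  obtain ⟨C, hC, hbC, haC⟩ := P.mem_part_iff_exists.1 hb
  obtain rfl : C = B := by
    by_contra hCB
    exact hab (card_le_one.1 (hP C hC hCB).le a haC b hbC)
  exact ⟨haC, hbC⟩

end Finpartition

lemma exists_perm_map_eq_of_injOn {α : Type*} {S : Set α} {T B : Finset α} {f : α → α}
    (hcard : #T = #B) (hST : S ⊆ T) (hmaps : Set.MapsTo f S B) (hinj : Set.InjOn f S) :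
    ∃ g : Equiv.Perm α, T.map g.toEmbedding = B ∧ ∀ i ∈ S, g i = f i := by
  obtain ⟨e, he⟩ := Set.MapsTo.exists_equiv_extend_of_card_eq (α := T) (t := B)
    (s := Subtype.val ⁻¹' S) (f := f ∘ Subtype.val) (by rw [Fintype.card_coe, hcard])
    (fun i hi ↦ hmaps hi) (fun i hi j hj h ↦ Subtype.val_injective (hinj hi hj h))
  obtain ⟨g, hg⟩ := Equiv.Perm.exists_extending_pair (Subtype.val : T → α) (fun i ↦ (e i : α))
    Subtype.val_injective (Subtype.val_injective.comp e.injective)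
  have hgB : T.map g.toEmbedding ⊆ B :=
    map_subset_iff_subset_preimage.2 fun i hi ↦ mem_preimage.2 (hg ⟨i, hi⟩ ▸ (e ⟨i, hi⟩).2)
  exact ⟨g, eq_of_subset_of_card_le hgB (by rw [card_map, hcard]),
    fun i hi ↦ (hg ⟨i, hST hi⟩).trans (he _ hi)⟩

lemma exists_mem_parts_of_shape_eq_hook {n p : ℕ} {hp : 0 < p} {hpn : p ≤ n} {x : SetPart n}
    (hx : shape x = hook n p hp hpn) :
    ∃ B ∈ x.parts, #B = p ∧ ∀ C ∈ x.parts, C ≠ B → #C = 1 := by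
  have hparts : x.parts.val.map card = p ::ₘ Multiset.replicate (n - p) 1 :=
    congrArg Nat.Partition.parts hx
  obtain ⟨B, hB, hBp, hrest⟩ := (Multiset.map_eq_cons _ _ _ _).2 hparts
  refine ⟨B, hB, hBp, fun C hC hCB ↦ Multiset.eq_of_mem_replicate (n := n - p) ?_⟩
  exact hrest ▸ Multiset.mem_map_of_mem _ ((Multiset.mem_erase_of_ne hCB).2 hC)

section permAct

variable {n : ℕ} {a x y : SetPart n} {B : Finset (Fin n)}

lemma mem_parts_permAct {g : Equiv.Perm (Fin n)} :
    B ∈ (permAct g a).parts ↔ ∃ p ∈ a.parts, p.map g.toEmbedding = B :=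
  mem_map

lemma apply_mem_part_permAct_iff {g : Equiv.Perm (Fin n)} {i j : Fin n} :
    g j ∈ (permAct g a).part (g i) ↔ j ∈ a.part i := by
  simp only [Finpartition.mem_part_iff_exists, mem_parts_permAct, exists_exists_and_eq_and,
    mem_map_equiv, Equiv.symm_apply_apply]

lemma exists_permAct_forall_mem_part_eq (ha : a ≠ ⊥) (hB : #B = #a.parts + 1) {u v : Fin n}
    (hu : u ∈ B) (hv : v ∈ B) (huv : u ≠ v) :
    ∃ g, ∀ i ∈ B, ∀ j ∈ B, i ≠ j → j ∈ (permAct g a).part i → s(i, j) = s(u, v) := by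
  obtain ⟨s, t, hst, ht⟩ := ne_bot_iff_exists_mem_part.1 ha
  obtain ⟨T, -, hT, hsT, htT, hpair⟩ := exists_card_eq_card_parts_add_one_of_mem_part hst ht
  obtain ⟨g, rfl, hg⟩ : ∃ g : Equiv.Perm (Fin n), T.map g.toEmbedding = B ∧
      ∀ i ∈ ({s, t} : Set (Fin n)), g i = if i = s then u else v :=
    exists_perm_map_eq_of_injOn (hT.trans hB.symm) (by grind) (by grind [Set.MapsTo])
      (by grind [Set.InjOn])
  obtain rfl : g s = u := by grind
  obtain rfl : g t = v := by grind
  refine ⟨g, fun i hi j hj hij hji ↦ ?_⟩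
  obtain ⟨i, hiT, rfl⟩ := mem_map.1 hi
  obtain ⟨j, hjT, rfl⟩ := mem_map.1 hj
  exact congrArg (Sym2.map g)
    (hpair i hiT j hjT (ne_of_apply_ne g hij) (apply_mem_part_permAct_iff.1 hji))

lemma le_of_forall_not_disjoint_permAct (ha : a ≠ ⊥) (hB : #B = #a.parts + 1)
    (hx : ∀ C ∈ x.parts, C ≠ B → #C = 1) (hyx : y ≤ x)
    (hy : ∀ g, ¬Disjoint y (permAct g a)) : x ≤ y := by
  refine le_iff_part_subset_part.2 fun u v hv ↦ ?_
  obtain rfl | huv := eq_or_ne u v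
  · exact y.mem_part (mem_univ u)
  obtain ⟨huB, hvB⟩ := mem_and_mem_of_mem_part_of_forall_card_eq_one hx huv hv
  obtain ⟨g, hg⟩ := exists_permAct_forall_mem_part_eq ha hB huB hvB huv
  obtain ⟨i, j, hij, hjy, hja⟩ := not_disjoint_iff_exists_mem_part.1 (hy g)
  obtain ⟨hiB, hjB⟩ := mem_and_mem_of_mem_part_of_forall_card_eq_one hx hij
    (le_iff_part_subset_part.1 hyx i hjy)
  obtain ⟨rfl, rfl⟩ | ⟨rfl, rfl⟩ := Sym2.eq_iff.1 (hg i hiB j hjB hij hja)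
  · exact hjy
  · exact mem_part_comm.1 hjy

end permAct

lemma fi_hook_subset_blocker {n : ℕ} {A : Set (SetPart n)} {a : SetPart n}
    (hinv : SnInvariant A) (haA : a ∈ A) (ha : a ≠ ⊥)
    (hmax : ∀ b ∈ A, #b.parts ≤ #a.parts) (hn : #a.parts + 1 ≤ n) :
    fi {hook n (#a.parts + 1) (Nat.succ_pos _) hn} ⊆ blocker A := by
  intro x hx
  obtain ⟨B, hB, hBa, hrest⟩ := exists_mem_parts_of_shape_eq_hook hx
  refine mem_blocker_iff_minimal_s13.2 ⟨fun b hb ↦ ?_, fun y hy hyx ↦ ?_⟩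
  · exact not_disjoint_of_card_parts_lt_card hB (hBa ▸ Nat.lt_succ_of_le (hmax b hb))
  · exact le_of_forall_not_disjoint_permAct ha hBa hrest hyx fun g ↦ hy _ (hinv g a haA)

theorem blocker_contains_hook_general (n : ℕ) (A : Set (SetPart n))
    (hne : A.Nonempty) (hbot : ⊥ ∉ A) (hinv : SnInvariant A) :
    ∃ (p : ℕ) (hp : 2 ≤ p) (hpn : p ≤ n),
      fi {hook n p (zero_lt_two.trans_le hp) hpn} ⊆ blocker A := by
  obtain ⟨a, haA, hmax⟩ := Set.exists_max_image A (fun a ↦ #a.parts) A.toFinite hne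
  have ha : a ≠ ⊥ := ne_of_mem_of_not_mem haA hbot
  have hlt : #a.parts < n := (card_parts_lt_card_of_ne_bot ha).trans_eq (card_fin n)
  exact ⟨#a.parts + 1, Nat.succ_le_succ (card_parts_pos_of_ne_bot ha), hlt,
    fi_hook_subset_blocker hinv haA ha hmax hlt⟩

/-- Corollary 3.3 (first part): the blocker of every `S_n`-invariant antichain in
`Π_n` contains the hook-shape antichain `fi((p, 1^{n-p}))` for some `2 ≤ p ≤ n`. -/
theorem blocker_contains_hook (n : ℕ) (A : Set (SetPart n))
    (hA : IsAnti A) (hinv : SnInvariant A) :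
    ∃ (p : ℕ) (hp : 2 ≤ p) (hpn : p ≤ n),
      fi {hook n p (by omega) hpn} ⊆ blocker A :=
  blocker_contains_hook_general n A hA.1 hA.2.1 hinv
end
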